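/- Under the stated hypotheses, if σ and Σ are subordinated with sup σ < inf Σ, then ‖E_A(σ) − E_B((−∞, sup σ])‖ ≤ sin((1/2)·arctan(2‖V‖/d)) < √2/2. -/

import Mathlib

/-- `E` is the projection-valued spectral measure of the bounded self-adjoint operator `T`
on the complex Hilbert space `H`: each `E Δ` (for Borel `Δ ⊆ ℝ`) is an orthogonal
projection, `E` is multiplicative and countably additive (in the strong sense), `E ℝ = 1`,
each `E Δ` commutes with `T`, and on the range of `E Δ` the operator `T` has its
approximate point spectrum inside the closure of `Δ` (which uniquely characterizes the
spectral measure of `T`). -/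
structure IsSpectralMeasure {H : Type*} [NormedAddCommGroup H] [InnerProductSpace ℂ H]
    [CompleteSpace H] (T : H →L[ℂ] H) (E : Set ℝ → H →L[ℂ] H) : Prop where
  isSelfAdjoint : ∀ Δ : Set ℝ, MeasurableSet Δ → IsSelfAdjoint (E Δ)
  map_inter : ∀ Δ₁ Δ₂ : Set ℝ, MeasurableSet Δ₁ → MeasurableSet Δ₂ →
    E Δ₁ * E Δ₂ = E (Δ₁ ∩ Δ₂)
  map_univ : E Set.univ = 1
  countably_additive : ∀ Δ : ℕ → Set ℝ, (∀ n, MeasurableSet (Δ n)) →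
    Pairwise (Function.onFun Disjoint Δ) →
    ∀ x : H, HasSum (fun n => E (Δ n) x) (E (⋃ n, Δ n) x)
  commutes : ∀ Δ : Set ℝ, MeasurableSet Δ → Commute T (E Δ)
  spectrum_loc : ∀ Δ : Set ℝ, MeasurableSet Δ → ∀ x : H, E Δ x = x →
    ∀ μ : ℝ, Metric.infDist μ Δ * ‖x‖ ≤ ‖T x - (μ : ℂ) • x‖

/-- An operator is bounded below after shifting by a point outside its spectrum. -/
lemma exists_bounded_below_of_notMem_spectrum {H : Type*} [NormedAddCommGroup H]
    [InnerProductSpace ℂ H] {T : H →L[ℂ] H} {t : ℝ} (ht : t ∉ spectrum ℝ T) :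
    ∃ c > 0, ∀ x, c * ‖x‖ ≤ ‖T x - (t : ℂ) • x‖ := by
  obtain ⟨u, hu⟩ := spectrum.notMem_iff.mp ht
  obtain ⟨S, hS⟩ : ∃ S : H →L[ℂ] H, S = ↑u⁻¹ := ⟨_, rfl⟩
  refine ⟨(‖S‖ + 1)⁻¹, by positivity, fun x ↦ ?_⟩
  have h1 : S ((u : H →L[ℂ] H) x) = x := hS ▸ congr($(u.inv_mul) x)
  have h2 : (u : H →L[ℂ] H) x = -(T x - (t : ℂ) • x) := by
    rw [hu]
    simp [Algebra.algebraMap_eq_smul_one]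
  rw [inv_mul_le_iff₀ (by positivity), ← norm_neg (T x - _), ← h2]
  calc ‖x‖ = ‖S ((u : H →L[ℂ] H) x)‖ := by rw [h1]
    _ ≤ ‖S‖ * ‖(u : H →L[ℂ] H) x‖ := S.le_opNorm _
    _ ≤ (‖S‖ + 1) * ‖(u : H →L[ℂ] H) x‖ := by gcongr; linarith

lemma re_inner_ofReal_smul_self {H : Type*} [NormedAddCommGroup H]
    [InnerProductSpace ℂ H] (x : H) (r : ℝ) :
    (inner ℂ x ((r : ℂ) • x)).re = r * ‖x‖ ^ 2 := by
  rw [inner_smul_right, Complex.re_ofReal_mul, ← inner_self_eq_norm_sq (𝕜 := ℂ) x]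
  rfl

section SelfAdjoint

variable {H : Type*} [NormedAddCommGroup H] [InnerProductSpace ℂ H] [CompleteSpace H]

open ContinuousLinearMap

lemma IsSelfAdjoint.inner_map_comm {S : H →L[ℂ] H} (hS : IsSelfAdjoint S) (x y : H) :
    inner ℂ (S x) y = inner ℂ x (S y) :=
  (isSelfAdjoint_iff_isSymmetric.mp hS) x y

/-- A self-adjoint operator that is bounded below is invertible. -/
lemma IsSelfAdjoint.isUnit_of_bounded_below {S : H →L[ℂ] H} (hS : IsSelfAdjoint S) {c : ℝ}
    (hc : 0 < c) (h : ∀ x, c * ‖x‖ ≤ ‖S x‖) : IsUnit S := by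
  rw [isUnit_iff_bijective, bijective_iff_dense_range_and_antilipschitz]
  refine ⟨?_, ⟨(⟨c, hc.le⟩ : NNReal)⁻¹, S.antilipschitz_of_bound fun x ↦ ?_⟩⟩
  · rw [Submodule.topologicalClosure_eq_top_iff, Submodule.eq_bot_iff]
    intro x hx
    have hSx : S x = 0 := by
      rw [← inner_self_eq_zero (𝕜 := ℂ), ← hS.inner_map_comm]
      exact hx (S (S x)) ⟨S x, rfl⟩
    have := h x
    rw [hSx, norm_zero] at this
    exact norm_eq_zero.mp (le_antisymm (by nlinarith) (norm_nonneg x))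
  · change ‖x‖ ≤ c⁻¹ * ‖S x‖
    rw [inv_mul_eq_div, le_div_iff₀ hc, mul_comm]
    exact h x

/-- If `S - μ` is bounded below for every `μ < b`, then the quadratic form of the self-adjoint
operator `S` is bounded below by `b`. -/
lemma IsSelfAdjoint.le_re_inner_of_bounded_below {S : H →L[ℂ] H} (hS : IsSelfAdjoint S) {b : ℝ}
    (h : ∀ μ < b, ∃ c > 0, ∀ x, c * ‖x‖ ≤ ‖S x - (μ : ℂ) • x‖) (x : H) :
    b * ‖x‖ ^ 2 ≤ (inner ℂ x (S x)).re := by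
  have hle : algebraMap ℝ (H →L[ℂ] H) b ≤ S := by
    refine algebraMap_le_of_le_spectrum (fun μ hμ ↦ ?_) hS
    by_contra! hlt
    obtain ⟨c, hc, hcx⟩ := h μ hlt
    refine hμ ?_
    rw [spectrum.mem_resolventSet_iff, ← IsUnit.neg_iff, neg_sub]
    refine (hS.sub (IsSelfAdjoint.algebraMap _ (IsSelfAdjoint.all μ))).isUnit_of_bounded_below hc
      fun x ↦ ?_
    simpa [Algebra.algebraMap_eq_smul_one] using hcx x
  have := (le_def _ _ |>.mp hle).re_inner_nonneg_right x
  have hb : (algebraMap ℝ (H →L[ℂ] H) b) x = (b : ℂ) • x := by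
    simp [Algebra.algebraMap_eq_smul_one]
  rw [sub_apply, hb, inner_sub_right, map_sub, sub_nonneg] at this
  rwa [← re_inner_ofReal_smul_self]

/-- Localized form of `IsSelfAdjoint.le_re_inner_of_bounded_below` on the range of an orthogonal
projection commuting with the operator. -/
lemma IsSelfAdjoint.le_re_inner_of_mem_range {T P : H →L[ℂ] H} (hT : IsSelfAdjoint T)
    (hP : IsStarProjection P) (hTP : Commute T P) {b : ℝ}
    (h : ∀ x, P x = x → ∀ μ < b, (b - μ) * ‖x‖ ≤ ‖T x - (μ : ℂ) • x‖) {x : H} (hx : P x = x) :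
    b * ‖x‖ ^ 2 ≤ (inner ℂ x (T x)).re := by
  have hPP (y : H) : P (P y) = P y := congr($(hP.isIdempotentElem.eq) y)
  have hPT (y : H) : P (T y) = T (P y) := congr($(hTP.eq.symm) y)
  have hself : IsSelfAdjoint (T * P + (b : ℂ) • (1 - P)) :=
    (hT.commute_iff hP.isSelfAdjoint |>.mp hTP).add
      (IsSelfAdjoint.smul (Complex.conj_ofReal b) ((IsSelfAdjoint.one _).sub hP.isSelfAdjoint))
  have key := hself.le_re_inner_of_bounded_below (b := b) (fun μ hμ ↦ ⟨b - μ, by linarith, ?_⟩) x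
  · simpa [hx] using key
  intro y
  have hμ0 : 0 ≤ b - μ := by linarith
  set p := T (P y) - (μ : ℂ) • P y with hp
  set q := ((b - μ : ℝ) : ℂ) • (y - P y) with hq
  have hdecomp : (T * P + (b : ℂ) • (1 - P)) y - (μ : ℂ) • y = p + q := by
    simp only [hp, hq, add_apply, mul_apply_eq_comp, smul_apply, sub_apply, one_apply_eq_self]
    push_cast
    module
  have horth (u v : H) (hu : P u = u) : inner ℂ u (v - P v) = 0 := by
    rw [inner_sub_right, ← hP.isSelfAdjoint.inner_map_comm, hu, sub_self]
  have hpq : inner ℂ p q = 0 := by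
    rw [hq, inner_smul_right, horth p y (by simp [hp, hPT, hPP]), mul_zero]
  have h1 : ‖p + q‖ ^ 2 = ‖p‖ ^ 2 + ‖q‖ ^ 2 := by
    simpa [pow_two] using norm_add_sq_eq_norm_sq_add_norm_sq_of_inner_eq_zero p q hpq
  have h2 : ‖y‖ ^ 2 = ‖P y‖ ^ 2 + ‖y - P y‖ ^ 2 := by
    have := norm_add_sq_eq_norm_sq_add_norm_sq_of_inner_eq_zero _ _ (horth (P y) y (hPP y))
    simpa [pow_two] using this
  have h3 : (b - μ) * ‖P y‖ ≤ ‖p‖ := h (P y) (hPP y) μ hμ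
  have h4 : ‖q‖ = (b - μ) * ‖y - P y‖ := by
    rw [hq, norm_smul, Complex.norm_real, Real.norm_of_nonneg hμ0]
  rw [hdecomp]
  refine abs_le_of_sq_le_sq' ?_ (norm_nonneg _) |>.2
  rw [h1, h4, mul_pow, h2]
  have := pow_le_pow_left₀ (by positivity) h3 2
  nlinarith

/-- Numerical radius bound on an invariant subspace. -/
lemma IsSelfAdjoint.norm_map_le_of_mem_range {S P : H →L[ℂ] H} (hS : IsSelfAdjoint S)
    (hSP : Commute S P) {ε : ℝ} (hε : 0 < ε)
    (h : ∀ x, P x = x → |(inner ℂ x (S x)).re| ≤ ε * ‖x‖ ^ 2) {x : H} (hx : P x = x) :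
    ‖S x‖ ≤ ε * ‖x‖ := by
  set y := ((ε⁻¹ : ℝ) : ℂ) • S x with hy
  have hPS : P (S x) = S x := by rw [← mul_apply_eq_comp, ← hSP.eq, mul_apply_eq_comp, hx]
  have hPy : P y = y := by rw [hy, map_smul, hPS]
  have h1 := (abs_le.mp (h (x + y) (by rw [map_add, hx, hPy]))).2
  have h2 := (abs_le.mp (h (x - y) (by rw [map_sub, hx, hPy]))).1
  have hpar := parallelogram_law_with_norm ℂ x y
  have hcross : (inner ℂ y (S x)).re = ε⁻¹ * ‖S x‖ ^ 2 := by
    rw [hy, inner_smul_left, Complex.conj_ofReal, Complex.re_ofReal_mul,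
      ← inner_self_eq_norm_sq (𝕜 := ℂ) (S x)]
    rfl
  have hcross' : (inner ℂ x (S y)).re = ε⁻¹ * ‖S x‖ ^ 2 := by
    rw [← hcross, ← hS.inner_map_comm, ← inner_conj_symm, Complex.conj_re]
  have hny : ‖y‖ = ε⁻¹ * ‖S x‖ := by
    rw [hy, norm_smul, Complex.norm_real, Real.norm_of_nonneg (by positivity)]
  simp only [map_add, map_sub, inner_add_left, inner_add_right, inner_sub_left, inner_sub_right,
    Complex.add_re, Complex.sub_re, hcross, hcross'] at h1 h2
  have h3 : 4 * (ε⁻¹ * ‖S x‖ ^ 2) ≤ ε * (2 * (‖x‖ ^ 2 + (ε⁻¹ * ‖S x‖) ^ 2)) := by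
    rw [← hny]
    nlinarith
  refine abs_le_of_sq_le_sq' ?_ (by positivity) |>.2
  have h4 : ε * (2 * (‖x‖ ^ 2 + (ε⁻¹ * ‖S x‖) ^ 2)) = 2 * ε * ‖x‖ ^ 2 + 2 * (ε⁻¹ * ‖S x‖ ^ 2) := by
    field_simp
  have h5 : ε⁻¹ * ‖S x‖ ^ 2 ≤ ε * ‖x‖ ^ 2 := by linarith
  rw [inv_mul_le_iff₀ hε] at h5
  linarith [mul_pow ε ‖x‖ 2]

namespace IsSpectralMeasure

variable {T : H →L[ℂ] H} {E : Set ℝ → H →L[ℂ] H}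

lemma isStarProjection (hE : IsSpectralMeasure T E) {Δ : Set ℝ} (hΔ : MeasurableSet Δ) :
    IsStarProjection (E Δ) where
  isIdempotentElem := by rw [IsIdempotentElem, hE.map_inter Δ Δ hΔ hΔ, Set.inter_self]
  isSelfAdjoint := hE.isSelfAdjoint Δ hΔ

lemma map_empty (hE : IsSpectralMeasure T E) : E ∅ = 0 := by
  ext x
  have h := hE.countably_additive (fun _ ↦ ∅) (fun _ ↦ MeasurableSet.empty)
    (fun _ _ _ ↦ disjoint_bot_left) x
  exact tendsto_nhds_unique tendsto_const_nhds h.summable.tendsto_atTop_zero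

lemma map_union (hE : IsSpectralMeasure T E) {Δ₁ Δ₂ : Set ℝ} (h₁ : MeasurableSet Δ₁)
    (h₂ : MeasurableSet Δ₂) (h : Disjoint Δ₁ Δ₂) : E (Δ₁ ∪ Δ₂) = E Δ₁ + E Δ₂ := by
  let F : ℕ → Set ℝ := fun n ↦ if n = 0 then Δ₁ else if n = 1 then Δ₂ else ∅
  have hF : ⋃ n, F n = Δ₁ ∪ Δ₂ := by
    ext t
    simp only [Set.mem_iUnion, Set.mem_union, F]
    constructor
    · rintro ⟨n, hn⟩
      split_ifs at hn <;> simp_all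
    · rintro (ht | ht)
      exacts [⟨0, by simpa using ht⟩, ⟨1, by simpa using ht⟩]
  ext x
  have hsum := hE.countably_additive F
    (fun n ↦ by dsimp only [F]; split_ifs <;> simp [h₁, h₂])
    (fun i j hij ↦ by
      dsimp only [F, Function.onFun]
      split_ifs <;> first | (exfalso; omega) | simp [h, h.symm]) x
  rw [hF] at hsum
  refine hsum.unique ?_
  have hzero : ∀ n ∉ ({0, 1} : Finset ℕ), E (F n) x = 0 := by
    intro n hn
    simp only [Finset.mem_insert, Finset.mem_singleton, not_or] at hn
    simp [F, hn.1, hn.2, hE.map_empty]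
  simpa [F] using hasSum_sum_of_ne_finset_zero hzero

lemma map_compl (hE : IsSpectralMeasure T E) {Δ : Set ℝ} (hΔ : MeasurableSet Δ) :
    E Δᶜ = 1 - E Δ := by
  rw [eq_sub_iff_add_eq', ← hE.map_union hΔ hΔ.compl disjoint_compl_right, Set.union_compl_self,
    hE.map_univ]

lemma map_eq_zero_of_subset (hE : IsSpectralMeasure T E) {Δ₁ Δ₂ : Set ℝ} (h₁ : MeasurableSet Δ₁)
    (h₂ : MeasurableSet Δ₂) (h : Δ₁ ⊆ Δ₂) (h0 : E Δ₂ = 0) : E Δ₁ = 0 := by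
  rw [← Set.inter_eq_self_of_subset_left h, ← hE.map_inter Δ₁ Δ₂ h₁ h₂, h0, mul_zero]

lemma map_iUnion_eq_zero (hE : IsSpectralMeasure T E) {Δ : ℕ → Set ℝ}
    (hΔ : ∀ n, MeasurableSet (Δ n)) (h0 : ∀ n, E (Δ n) = 0) : E (⋃ n, Δ n) = 0 := by
  ext x
  have h := hE.countably_additive (disjointed Δ) (fun n ↦ MeasurableSet.disjointed hΔ n)
    (disjoint_disjointed Δ) x
  rw [iUnion_disjointed] at h
  have hzero (n : ℕ) : E (disjointed Δ n) = 0 := hE.map_eq_zero_of_subset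
    (MeasurableSet.disjointed hΔ n) (hΔ n) (disjointed_subset Δ n) (h0 n)
  simp only [hzero, zero_apply] at h
  exact h.unique hasSum_zero

lemma le_re_inner (hE : IsSpectralMeasure T E) (hT : IsSelfAdjoint T) {Δ : Set ℝ}
    (hΔ : MeasurableSet Δ) {b : ℝ} (hb : ∀ t ∈ Δ, b ≤ t) {x : H} (hx : E Δ x = x) :
    b * ‖x‖ ^ 2 ≤ (inner ℂ x (T x)).re := by
  refine hT.le_re_inner_of_mem_range (hE.isStarProjection hΔ) (hE.commutes Δ hΔ)
    (fun y hy μ hμ ↦ ?_) hx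
  refine le_trans ?_ (hE.spectrum_loc Δ hΔ y hy μ)
  rcases Δ.eq_empty_or_nonempty with rfl | hne
  · rw [hE.map_empty, zero_apply] at hy
    simp [← hy]
  · gcongr
    refine (Metric.le_infDist hne).mpr fun t ht ↦ ?_
    rw [Real.dist_eq, abs_sub_comm]
    exact le_trans (by linarith [hb t ht]) (le_abs_self _)

lemma re_inner_le (hE : IsSpectralMeasure T E) (hT : IsSelfAdjoint T) {Δ : Set ℝ}
    (hΔ : MeasurableSet Δ) {b : ℝ} (hb : ∀ t ∈ Δ, t ≤ b) {x : H} (hx : E Δ x = x) :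
    (inner ℂ x (T x)).re ≤ b * ‖x‖ ^ 2 := by
  have key : -b * ‖x‖ ^ 2 ≤ (inner ℂ x ((-T) x)).re := by
    refine hT.neg.le_re_inner_of_mem_range (hE.isStarProjection hΔ) (hE.commutes Δ hΔ).neg_left
      (fun y hy μ hμ ↦ ?_) hx
    have hloc := hE.spectrum_loc Δ hΔ y hy (-μ)
    have hnorm : ‖(-T) y - (μ : ℂ) • y‖ = ‖T y - ((-μ : ℝ) : ℂ) • y‖ := by
      rw [← norm_neg, neg_apply]
      congr 1
      push_cast
      module
    rw [hnorm]
    refine le_trans ?_ hloc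
    rcases Δ.eq_empty_or_nonempty with rfl | hne
    · rw [hE.map_empty, zero_apply] at hy
      simp [← hy]
    · gcongr
      refine (Metric.le_infDist hne).mpr fun t ht ↦ ?_
      rw [Real.dist_eq]
      exact le_trans (by linarith [hb t ht]) (le_abs_self _)
  rw [neg_apply, inner_neg_right, Complex.neg_re] at key
  linarith

/-- A spectral measure vanishes on open sets of points `t` for which `T - t` is bounded below. -/
lemma map_isOpen_eq_zero (hE : IsSpectralMeasure T E) (hT : IsSelfAdjoint T) {U : Set ℝ}
    (hU : IsOpen U) (h : ∀ t ∈ U, ∃ c > 0, ∀ x, c * ‖x‖ ≤ ‖T x - (t : ℂ) • x‖) : E U = 0 := by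
  have hball (t : ℝ) (ht : t ∈ U) : ∃ ε > 0, E (Metric.ball t ε) = 0 := by
    obtain ⟨c, hc, hcx⟩ := h t ht
    refine ⟨c / 2, half_pos hc, ?_⟩
    have hm : MeasurableSet (Metric.ball t (c / 2)) := measurableSet_ball
    have hself : IsSelfAdjoint (T - (t : ℂ) • (1 : H →L[ℂ] H)) :=
      hT.sub (IsSelfAdjoint.smul (Complex.conj_ofReal t) (IsSelfAdjoint.one _))
    have hcomm : Commute (T - (t : ℂ) • (1 : H →L[ℂ] H)) (E (Metric.ball t (c / 2))) :=
      (hE.commutes _ hm).sub_left ((Commute.one_left _).smul_left _)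
    ext x
    set y := E (Metric.ball t (c / 2)) x with hy
    have hPy : E (Metric.ball t (c / 2)) y = y :=
      congr($((hE.isStarProjection hm).isIdempotentElem.eq) x)
    have hle := hself.norm_map_le_of_mem_range hcomm (half_pos hc) (fun z hz ↦ ?_) hPy
    · have := hcx y
      simp only [sub_apply, smul_apply, one_apply_eq_self] at hle
      exact norm_eq_zero.mp (le_antisymm (by nlinarith) (norm_nonneg y))
    have hlow := hE.le_re_inner hT hm (b := t - c / 2)
      (fun s hs ↦ by rw [Real.ball_eq_Ioo] at hs; exact hs.1.le) hz
    have hup := hE.re_inner_le hT hm (b := t + c / 2)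
      (fun s hs ↦ by rw [Real.ball_eq_Ioo] at hs; exact hs.2.le) hz
    simp only [sub_apply, smul_apply, one_apply_eq_self, inner_sub_right, Complex.sub_re,
      re_inner_ofReal_smul_self]
    rw [abs_le]
    constructor <;> nlinarith
  choose! ε hε hεE using hball
  obtain ⟨S, hSU, hSc, hcover⟩ := TopologicalSpace.countable_cover_nhdsWithin (s := U)
    (f := fun t ↦ Metric.ball t (ε t))
    fun t ht ↦ mem_nhdsWithin_of_mem_nhds (Metric.ball_mem_nhds t (hε t ht))
  rcases S.eq_empty_or_nonempty with rfl | hne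
  · have : U = ∅ := by simpa using hcover
    rw [this, hE.map_empty]
  obtain ⟨g, rfl⟩ := hSc.exists_eq_range hne
  rw [Set.biUnion_range] at hcover
  exact hE.map_eq_zero_of_subset hU.measurableSet
    (MeasurableSet.iUnion fun n ↦ measurableSet_ball) hcover
    (hE.map_iUnion_eq_zero (fun n ↦ measurableSet_ball) fun n ↦ hεE _ (hSU ⟨n, rfl⟩))

end IsSpectralMeasure

lemma IsStarProjection.isSelfAdjoint_one_sub_two_nsmul {P : H →L[ℂ] H} (hP : IsStarProjection P) :
    IsSelfAdjoint (1 - 2 • P) := by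
  rw [two_nsmul]
  exact (IsSelfAdjoint.one _).sub (hP.isSelfAdjoint.add hP.isSelfAdjoint)

lemma IsIdempotentElem.one_sub_two_nsmul_mul_self {R : Type*} [Ring R] {p : R}
    (hp : IsIdempotentElem p) : (1 - 2 • p) * (1 - 2 • p) = 1 := by
  have : (1 - 2 • p) * (1 - 2 • p) = 1 - 4 • p + 4 • (p * p) := by noncomm_ring
  rw [this, hp.eq, sub_add_cancel]

lemma IsSelfAdjoint.norm_map_eq_of_mul_self_eq_one {J : H →L[ℂ] H} (hJ : IsSelfAdjoint J)
    (hJJ : J * J = 1) (x : H) : ‖J x‖ = ‖x‖ := by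
  have hJx : J (J x) = x := congr($hJJ x)
  have h : inner ℂ (J x) (J x) = inner ℂ x x := by rw [hJ.inner_map_comm, hJx]
  simp only [inner_self_eq_norm_sq_to_K] at h
  exact (pow_left_inj₀ (norm_nonneg _) (norm_nonneg _) two_ne_zero).mp (by exact_mod_cast h)

lemma IsSelfAdjoint.im_inner_map_self {S : H →L[ℂ] H} (hS : IsSelfAdjoint S) (x : H) :
    (inner ℂ x (S x)).im = 0 := by
  rw [← Complex.conj_eq_iff_im, inner_conj_symm, hS.inner_map_comm]

/-- If `T ≤ a` on the range of `P` and `b ≤ T` on its kernel, then the reflection `1 - 2 P` turns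
`T - l` into an operator bounded below by every `γ ≤ min (l - a) (b - l)`. -/
lemma IsStarProjection.le_re_inner_reflection {T P : H →L[ℂ] H} (hP : IsStarProjection P)
    (hTP : Commute T P) {a b l γ : ℝ}
    (ha : ∀ x, P x = x → (inner ℂ x (T x)).re ≤ a * ‖x‖ ^ 2)
    (hb : ∀ x, P x = 0 → b * ‖x‖ ^ 2 ≤ (inner ℂ x (T x)).re)
    (hla : γ ≤ l - a) (hlb : γ ≤ b - l) (x : H) :
    γ * ‖x‖ ^ 2 ≤ (inner ℂ x ((1 - 2 • P : H →L[ℂ] H) (T x - (l : ℂ) • x))).re := by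
  have hPP (y : H) : P (P y) = P y := congr($(hP.isIdempotentElem.eq) y)
  have hPT (y : H) : P (T y) = T (P y) := congr($(hTP.eq.symm) y)
  obtain ⟨p, hp⟩ : ∃ p, p = P x := ⟨_, rfl⟩
  obtain ⟨q, hq⟩ : ∃ q, q = x - P x := ⟨_, rfl⟩
  have hPp : P p = p := by rw [hp, hPP]
  have hPq : P q = 0 := by rw [hq, map_sub, hPP, sub_self]
  have hx : x = p + q := by rw [hp, hq]; abel
  have horth (u v : H) (hu : P u = u) (hv : P v = 0) : inner ℂ u v = 0 := by
    rw [← hu, hP.isSelfAdjoint.inner_map_comm, hv, inner_zero_right]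
  have hTp : P (T p) = T p := by rw [hPT, hPp]
  have hTq : P (T q) = 0 := by rw [hPT, hPq, map_zero]
  have hJ : (1 - 2 • P : H →L[ℂ] H) (T x - (l : ℂ) • x) = (T q - (l : ℂ) • q) - (T p - (l : ℂ) • p) := by
    rw [hx]
    simp only [sub_apply, smul_apply, one_apply_eq_self, map_add, map_sub, map_smul, hTp, hTq, hPp,
      hPq]
    module
  have hnorm : ‖x‖ ^ 2 = ‖p‖ ^ 2 + ‖q‖ ^ 2 := by
    rw [hx]
    simpa [pow_two] using
      norm_add_sq_eq_norm_sq_add_norm_sq_of_inner_eq_zero p q (horth p q hPp hPq)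
  have hinner : inner ℂ x ((1 - 2 • P : H →L[ℂ] H) (T x - (l : ℂ) • x)) =
      inner ℂ q (T q) - inner ℂ q ((l : ℂ) • q) - (inner ℂ p (T p) - inner ℂ p ((l : ℂ) • p)) := by
    have h1 : inner ℂ p (T q) = 0 := horth p _ hPp hTq
    have h2 : inner ℂ p q = 0 := horth p q hPp hPq
    have h3 : inner ℂ q (T p) = 0 := inner_eq_zero_symm.mp (horth _ q hTp hPq)
    have h4 : inner ℂ q p = 0 := inner_eq_zero_symm.mp h2
    rw [hJ, hx]
    simp only [inner_add_left, inner_sub_right, inner_smul_right, h1, h2, h3, h4]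
    ring
  rw [hinner, hnorm]
  simp only [Complex.sub_re, re_inner_ofReal_smul_self]
  nlinarith [ha p hPp, hb q hPq, sq_nonneg ‖p‖, sq_nonneg ‖q‖,
    mul_le_mul_of_nonneg_right hla (sq_nonneg ‖p‖), mul_le_mul_of_nonneg_right hlb (sq_nonneg ‖q‖)]

lemma IsStarProjection.im_inner_reflection {T P : H →L[ℂ] H} (hP : IsStarProjection P)
    (hT : IsSelfAdjoint T) (hTP : Commute T P) (l : ℝ) (x : H) :
    (inner ℂ x ((1 - 2 • P : H →L[ℂ] H) (T x - (l : ℂ) • x))).im = 0 := by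
  have hself : IsSelfAdjoint (T - (l : ℂ) • (1 : H →L[ℂ] H)) :=
    hT.sub (IsSelfAdjoint.smul (Complex.conj_ofReal l) (IsSelfAdjoint.one _))
  have hcomm : Commute (1 - 2 • P) (T - (l : ℂ) • (1 : H →L[ℂ] H)) :=
    ((Commute.one_left _).sub_left ((hTP.symm.sub_right
      ((Commute.one_right _).smul_right _)).smul_left 2))
  exact ((hP.isSelfAdjoint_one_sub_two_nsmul.commute_iff hself).mp hcomm).im_inner_map_self x

section Reflections

variable {J K T : H →L[ℂ] H}

/-- If `K T ≥ 0` and the numerical range of `J T` is strictly inside a half plane whose interior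
does not contain the unimodular number `z`, then `z` is not in the approximate point spectrum of
the unitary `J K`. -/
lemma exists_bounded_below_reflection_mul_sub (hJ : IsSelfAdjoint J) (hJJ : J * J = 1)
    (hK : IsSelfAdjoint K) (hKK : K * K = 1)
    (hKT : ∀ x, 0 ≤ (inner ℂ x (K (T x))).re) (hKT' : ∀ x, (inner ℂ x (K (T x))).im = 0)
    {α β γ : ℝ} (hγ : 0 < γ)
    (h : ∀ x, γ * ‖x‖ ^ 2 ≤ α * (inner ℂ x (J (T x))).re - β * (inner ℂ x (J (T x))).im)
    {z : ℂ} (hz : ‖z‖ = 1) (hαβ : α * z.re - β * z.im ≤ 0) :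
    ∃ c > 0, ∀ x, c * ‖x‖ ≤ ‖J (K x) - z • x‖ := by
  have hJx (x : H) : J (J x) = x := congr($hJJ x)
  have hKx (x : H) : K (K x) = x := congr($hKK x)
  have hzz : starRingEnd ℂ z * z = 1 := by rw [Complex.conj_mul', hz]; simp
  set M := (|α| + |β|) * ‖T‖ with hM
  have hM0 : 0 ≤ M := by positivity
  refine ⟨γ / (M + 1), by positivity, fun x ↦ ?_⟩
  obtain ⟨u, hu⟩ : ∃ u, u = J (K x) - z • x := ⟨_, rfl⟩
  rw [← hu]
  have hKJ : K (J x) = starRingEnd ℂ z • (x - K (J u)) := by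
    rw [hu, map_sub, map_sub, hJx, hKx, map_smul, map_smul, sub_sub_cancel, smul_smul, hzz,
      one_smul]
  have hf : inner ℂ x (J (T x)) =
      z * inner ℂ x (K (T x)) - z * inner ℂ (K (J u)) (K (T x)) := by
    rw [← hJ.inner_map_comm, ← hKx (T x), ← hK.inner_map_comm, hKJ, inner_smul_left,
      Complex.conj_conj, inner_sub_left, hKx, mul_sub]
  set e := z * inner ℂ (K (J u)) (K (T x)) with he
  have hnorm : ‖e‖ ≤ ‖u‖ * (‖T‖ * ‖x‖) := by
    rw [he, norm_mul, hz, one_mul]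
    refine (norm_inner_le_norm _ _).trans ?_
    rw [hK.norm_map_eq_of_mul_self_eq_one hKK, hK.norm_map_eq_of_mul_self_eq_one hKK,
      hJ.norm_map_eq_of_mul_self_eq_one hJJ]
    gcongr
    exact T.le_opNorm x
  have hre : -(α * e.re) ≤ |α| * ‖e‖ := by
    refine (neg_le_abs _).trans ?_
    rw [abs_mul]
    gcongr
    exact Complex.abs_re_le_norm e
  have him : β * e.im ≤ |β| * ‖e‖ := by
    refine (le_abs_self _).trans ?_
    rw [abs_mul]
    gcongr
    exact Complex.abs_im_le_norm e
  have hx := h x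
  rw [hf] at hx
  simp only [Complex.sub_re, Complex.sub_im, Complex.mul_re z (inner ℂ x (K (T x))),
    Complex.mul_im z (inner ℂ x (K (T x))), hKT' x] at hx
  have h1 : γ * ‖x‖ ^ 2 ≤ (|α| + |β|) * ‖e‖ := by
    nlinarith [mul_nonpos_of_nonpos_of_nonneg hαβ (hKT x)]
  have h2 : γ * ‖x‖ ^ 2 ≤ M * ‖u‖ * ‖x‖ := by
    calc γ * ‖x‖ ^ 2 ≤ (|α| + |β|) * (‖u‖ * (‖T‖ * ‖x‖)) := h1.trans (by gcongr)
      _ = M * ‖u‖ * ‖x‖ := by rw [hM]; ring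
  rw [div_mul_eq_mul_div, div_le_iff₀ (by positivity)]
  rcases (norm_nonneg x).eq_or_lt with hx0 | hx0
  · rw [← hx0]
    simp only [mul_zero]
    positivity
  · refine le_of_mul_le_mul_right ?_ hx0
    nlinarith [mul_nonneg (norm_nonneg u) (norm_nonneg x)]

/-- If `K T ≥ 0` and the numerical range of `J T` lies in the sector cut out by `δ ≤ re` and
`|im| ≤ v`, then `J K + K J ≥ 2 cos (arctan (v / δ))`. -/
lemma cos_arctan_le_re_inner_reflections (hJ : IsSelfAdjoint J) (hJJ : J * J = 1)
    (hK : IsSelfAdjoint K) (hKK : K * K = 1)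
    (hKT : ∀ x, 0 ≤ (inner ℂ x (K (T x))).re) (hKT' : ∀ x, (inner ℂ x (K (T x))).im = 0)
    {δ v : ℝ} (hδ : 0 < δ)
    (hre : ∀ x, δ * ‖x‖ ^ 2 ≤ (inner ℂ x (J (T x))).re)
    (him : ∀ x, |(inner ℂ x (J (T x))).im| ≤ v * ‖x‖ ^ 2) (x : H) :
    2 * Real.cos (Real.arctan (v / δ)) * ‖x‖ ^ 2 ≤ (inner ℂ x ((J * K + K * J) x)).re := by
  have hself : IsSelfAdjoint (J * K + K * J) := by
    rw [IsSelfAdjoint, star_add, star_mul, star_mul, hJ.star_eq, hK.star_eq, add_comm]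
  have hJx (x : H) : J (J x) = x := congr($hJJ x)
  have hKx (x : H) : K (K x) = x := congr($hKK x)
  have hJn := hJ.norm_map_eq_of_mul_self_eq_one hJJ
  have hKn := hK.norm_map_eq_of_mul_self_eq_one hKK
  refine hself.le_re_inner_of_bounded_below (fun μ hμ ↦ ?_) x
  rcases lt_or_ge μ (-2) with hμ2 | hμ2
  · refine ⟨-2 - μ, by linarith, fun y ↦ ?_⟩
    have h1 : ‖(J * K + K * J) y‖ ≤ 2 * ‖y‖ := by
      refine (norm_add_le (J (K y)) (K (J y))).trans ?_
      rw [hJn, hKn, hKn, hJn]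
      linarith
    have h2 := norm_sub_norm_le ((μ : ℂ) • y) ((J * K + K * J) y)
    rw [norm_sub_rev, norm_smul, Complex.norm_real, Real.norm_eq_abs,
      abs_of_neg (by linarith)] at h2
    linarith
  obtain ⟨t, rfl⟩ : ∃ t, μ = 2 * t := ⟨μ / 2, by ring⟩
  have htcos : t < Real.cos (Real.arctan (v / δ)) := by linarith
  have ht1 : t ≤ 1 := htcos.le.trans (Real.cos_le_one _)
  have ht2 : 0 ≤ 1 - t ^ 2 := by nlinarith
  obtain ⟨s, hs⟩ : ∃ s, s = √(1 - t ^ 2) := ⟨_, rfl⟩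
  have hs0 : 0 ≤ s := hs ▸ Real.sqrt_nonneg _
  have hts : t ^ 2 + s ^ 2 = 1 := by rw [hs, Real.sq_sqrt ht2]; ring
  have hfactor (r : ℝ) (hr : |r| = s) : ∃ c > 0, ∀ y, c * ‖y‖ ≤ ‖J (K y) - (⟨t, r⟩ : ℂ) • y‖ := by
    have hrs : r ^ 2 = s ^ 2 := by rw [← hr, sq_abs]
    have hz : ‖(⟨t, r⟩ : ℂ)‖ = 1 := by
      rw [Complex.norm_def, Complex.normSq_mk, ← pow_two, ← pow_two, hrs, hts, Real.sqrt_one]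
    rcases le_or_gt t 0 with ht0 | ht0
    · exact exists_bounded_below_reflection_mul_sub hJ hJJ hK hKK hKT hKT' (α := 1) (β := 0) hδ
        (by simpa using hre) hz (by simpa using ht0)
    have hcs : v * t < δ * s := by
      rw [Real.cos_arctan, lt_div_iff₀ (by positivity)] at htcos
      have h1 : (t * √(1 + (v / δ) ^ 2)) ^ 2 < 1 := by
        rw [sq_lt_one_iff₀ (by positivity)]; exact htcos
      rw [mul_pow, Real.sq_sqrt (by positivity)] at h1
      have h2 : (v / δ * t) ^ 2 < s ^ 2 := by nlinarith
      have h3 := lt_of_pow_lt_pow_left₀ 2 hs0 h2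
      rw [div_mul_eq_mul_div, div_lt_iff₀ hδ] at h3
      linarith
    rcases abs_eq_abs.mp (hr.trans (abs_of_nonneg hs0).symm) with rfl | rfl
    · refine exists_bounded_below_reflection_mul_sub hJ hJJ hK hKK hKT hKT' (α := r) (β := t)
        (γ := δ * r - v * t) (by linarith) (fun y ↦ ?_) hz (by dsimp only; linarith)
      nlinarith [mul_le_mul_of_nonneg_left (hre y) hs0,
        mul_le_mul_of_nonneg_left ((le_abs_self _).trans (him y)) ht0.le]
    · refine exists_bounded_below_reflection_mul_sub hJ hJJ hK hKK hKT hKT' (α := s) (β := -t)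
        (γ := δ * s - v * t) (by linarith) (fun y ↦ ?_) hz (by dsimp only; linarith)
      nlinarith [mul_le_mul_of_nonneg_left (hre y) hs0,
        mul_le_mul_of_nonneg_left ((neg_le_abs _).trans (him y)) ht0.le]
  obtain ⟨c, hc, hcy⟩ := hfactor s (abs_of_nonneg hs0)
  obtain ⟨c', hc', hcy'⟩ := hfactor (-s) (by rw [abs_neg, abs_of_nonneg hs0])
  refine ⟨c * c', mul_pos hc hc', fun y ↦ ?_⟩
  have hmul : (⟨t, s⟩ : ℂ) * ⟨t, -s⟩ = 1 := by
    apply Complex.ext <;> simp <;> nlinarith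
  have hadd : (⟨t, s⟩ : ℂ) + ⟨t, -s⟩ = ((2 * t : ℝ) : ℂ) := by
    apply Complex.ext <;> simp [two_mul]
  have hprod : J (K ((J * K + K * J) y - ((2 * t : ℝ) : ℂ) • y)) =
      J (K (J (K y) - (⟨t, -s⟩ : ℂ) • y)) - (⟨t, s⟩ : ℂ) • (J (K y) - (⟨t, -s⟩ : ℂ) • y) := by
    rw [smul_sub, smul_smul, hmul, ← hadd]
    simp only [add_apply, mul_apply_eq_comp, map_add, map_sub, map_smul, hKx, hJx]
    module
  calc c * c' * ‖y‖ = c * (c' * ‖y‖) := mul_assoc _ _ _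
    _ ≤ c * ‖J (K y) - (⟨t, -s⟩ : ℂ) • y‖ := by gcongr; exact hcy' y
    _ ≤ _ := hcy _
    _ = _ := by rw [← hprod, hJn, hKn]

end Reflections

/-- Comparison of the norm of a difference of orthogonal projections with the associated
reflections. -/
lemma IsStarProjection.norm_sub_le_of_reflections {P R : H →L[ℂ] H} (hP : IsStarProjection P)
    (hR : IsStarProjection R) {θ : ℝ} (hθ : 0 ≤ Real.sin (θ / 2))
    (h : ∀ x, 2 * Real.cos θ * ‖x‖ ^ 2 ≤
      (inner ℂ x (((1 - 2 • P) * (1 - 2 • R) +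
        (1 - 2 • R) * (1 - 2 • P) : H →L[ℂ] H) x)).re) :
    ‖P - R‖ ≤ Real.sin (θ / 2) := by
  refine opNorm_le_bound _ hθ fun x ↦ ?_
  have hop : (1 - 2 • P) * (1 - 2 • R) + (1 - 2 • R) * (1 - 2 • P) =
      2 • 1 - 4 • ((P - R) * (P - R)) := by
    have hP2 := hP.isIdempotentElem.eq
    have hR2 := hR.isIdempotentElem.eq
    have : (P - R) * (P - R) = P + R - P * R - R * P := by
      rw [sub_mul, mul_sub, mul_sub, hP2, hR2]
      abel
    rw [this]
    noncomm_ring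
  have hsq : (inner ℂ x (((P - R) * (P - R)) x)).re = ‖(P - R) x‖ ^ 2 := by
    rw [mul_apply_eq_comp, ← (hP.isSelfAdjoint.sub hR.isSelfAdjoint).inner_map_comm,
      ← inner_self_eq_norm_sq (𝕜 := ℂ)]
    rfl
  have hx := h x
  have hinner : (inner ℂ x ((2 • 1 - 4 • ((P - R) * (P - R)) : H →L[ℂ] H) x)).re =
      2 * ‖x‖ ^ 2 - 4 * ‖(P - R) x‖ ^ 2 := by
    have : (2 • 1 - 4 • ((P - R) * (P - R)) : H →L[ℂ] H) x =
        ((2 : ℝ) : ℂ) • x - ((4 : ℝ) : ℂ) • ((P - R) * (P - R)) x := by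
      simp only [sub_apply, smul_apply, one_apply_eq_self]
      push_cast
      module
    rw [this, inner_sub_right, Complex.sub_re, re_inner_ofReal_smul_self, inner_smul_right,
      Complex.re_ofReal_mul, hsq]
  rw [hop, hinner] at hx
  refine abs_le_of_sq_le_sq' ?_ (by positivity) |>.2
  have hcos : Real.cos θ = 1 - 2 * Real.sin (θ / 2) ^ 2 := by
    have := Real.cos_two_mul (θ / 2)
    rw [mul_div_cancel₀ θ two_ne_zero] at this
    linarith [Real.sin_sq_add_cos_sq (θ / 2)]
  rw [hcos] at hx
  nlinarith

end SelfAdjoint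
/-- **Theorem C (ii).** If the isolated parts `σ` and `Σ` of the spectrum of `A` are
subordinated, `sup σ < inf Σ`, and the perturbation `V` is off-diagonal, then
`‖E_A(σ) − E_B((−∞, sup σ])‖ ≤ sin((1/2) arctan (2‖V‖/d)) < √2/2`. -/
theorem norm_diff_projections_subordinated_case
    {H : Type*} [NormedAddCommGroup H] [InnerProductSpace ℂ H] [CompleteSpace H]
    [TopologicalSpace.SeparableSpace H]
    (A V B : H →L[ℂ] H) (hA : IsSelfAdjoint A) (hV : IsSelfAdjoint V) (hB : B = A + V)
    (σ Sig : Set ℝ) (hσc : IsClosed σ) (hSigc : IsClosed Sig) (hdisj : Disjoint σ Sig)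
    (hspec : spectrum ℝ A = σ ∪ Sig)
    (d : ℝ) (hd : d = sInf (Set.image2 dist σ Sig)) (hd0 : 0 < d)
    (EA EB : Set ℝ → H →L[ℂ] H) (hEA : IsSpectralMeasure A EA) (hEB : IsSpectralMeasure B EB)
    (hoff₁ : EA σ * V * EA σ = 0) (hoff₂ : EA Sig * V * EA Sig = 0)
    (hsub : sSup σ < sInf Sig) :
    ‖EA σ - EB (Set.Iic (sSup σ))‖ ≤ Real.sin (Real.arctan (2 * ‖V‖ / d) / 2) ∧
    Real.sin (Real.arctan (2 * ‖V‖ / d) / 2) < Real.sqrt 2 / 2 := by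
  have hτ : 0 ≤ 2 * ‖V‖ / d := by positivity
  have harc0 : 0 ≤ Real.arctan (2 * ‖V‖ / d) := Real.arctan_nonneg.mpr hτ
  have harc1 := Real.arctan_lt_pi_div_two (2 * ‖V‖ / d)
  have hpi := Real.pi_pos
  refine ⟨?_, ?_⟩
  swap
  · rw [← Real.sin_pi_div_four]
    exact Real.sin_lt_sin_of_lt_of_le_pi_div_two (by linarith) (by linarith) (by linarith)
  have hσm := hσc.measurableSet
  have hSigm := hSigc.measurableSet
  obtain ⟨a, ha⟩ : ∃ a, a = sSup σ := ⟨_, rfl⟩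
  obtain ⟨b, hb⟩ : ∃ b, b = sInf Sig := ⟨_, rfl⟩
  obtain ⟨m, hm⟩ : ∃ m, m = (a + b) / 2 := ⟨_, rfl⟩
  rw [← ha, ← hb] at hsub
  rw [← ha]
  have hBself : IsSelfAdjoint B := hB ▸ hA.add hV
  have hne : (Set.image2 dist σ Sig).Nonempty := by
    by_contra hcon
    rw [Set.not_nonempty_iff_eq_empty.mp hcon, Real.sInf_empty] at hd
    exact hd0.ne' hd
  obtain ⟨hσne, hSigne⟩ := Set.image2_nonempty_iff.mp hne
  have hcomp : IsCompact (σ ∪ Sig) := hspec ▸ spectrum.isCompact A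
  have hσbdd : BddAbove σ := hcomp.bddAbove.mono Set.subset_union_left
  have hSigbdd : BddBelow Sig := hcomp.bddBelow.mono Set.subset_union_right
  have hσle (t : ℝ) (ht : t ∈ σ) : t ≤ a := ha ▸ le_csSup hσbdd ht
  have hSigle (t : ℝ) (ht : t ∈ Sig) : b ≤ t := hb ▸ csInf_le hSigbdd ht
  have hdab : d ≤ b - a := by
    have hmem : dist a b ∈ Set.image2 dist σ Sig := Set.mem_image2_of_mem
      (ha ▸ hσc.csSup_mem hσne hσbdd) (hb ▸ hSigc.csInf_mem hSigne hSigbdd)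
    have hbdd : BddBelow (Set.image2 dist σ Sig) := by
      refine ⟨0, ?_⟩
      rintro _ ⟨_, _, _, _, rfl⟩
      exact dist_nonneg
    have := csInf_le hbdd hmem
    rwa [← hd, dist_comm, Real.dist_eq, abs_of_pos (by linarith)] at this
  -- the spectral measure of `A` is supported on the spectrum
  obtain ⟨P, hPdef⟩ : ∃ P, P = EA σ := ⟨_, rfl⟩
  have hP : IsStarProjection P := hPdef ▸ hEA.isStarProjection hσm
  have hcompl : EA (σ ∪ Sig)ᶜ = 0 := by
    refine hEA.map_isOpen_eq_zero hA hcomp.isClosed.isOpen_compl fun t ht ↦ ?_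
    rw [← hspec] at ht
    exact exists_bounded_below_of_notMem_spectrum ht
  have hQ : EA Sig = 1 - P := by
    have h1 := hEA.map_compl (hσm.union hSigm)
    rw [hcompl, hEA.map_union hσm hSigm hdisj, ← hPdef] at h1
    rw [eq_sub_iff_add_eq', eq_comm]
    exact sub_eq_zero.mp h1.symm
  have hAP : Commute A P := hPdef ▸ hEA.commutes σ hσm
  have hPle (x : H) (hx : P x = x) : (inner ℂ x (A x)).re ≤ a * ‖x‖ ^ 2 :=
    hEA.re_inner_le hA hσm hσle (hPdef ▸ hx)
  have hleQ (x : H) (hx : P x = 0) : b * ‖x‖ ^ 2 ≤ (inner ℂ x (A x)).re :=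
    hEA.le_re_inner hA hSigm hSigle (by simp [hQ, hx])
  -- the reflection anticommutes with `V`
  rw [← hPdef] at hoff₁ ⊢
  rw [hQ] at hoff₂
  obtain ⟨J, hJdef⟩ : ∃ J : H →L[ℂ] H, J = 1 - 2 • P := ⟨_, rfl⟩
  have hJ : IsSelfAdjoint J := hJdef ▸ hP.isSelfAdjoint_one_sub_two_nsmul
  have hJJ : J * J = 1 := hJdef ▸ hP.isIdempotentElem.one_sub_two_nsmul_mul_self
  have hJV : V * J = -(J * V) := by
    have h1 : (1 - P) * V * (1 - P) = V - P * V - V * P + P * V * P := by noncomm_ring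
    have h2 : V * J + J * V = 2 • (V - P * V - V * P) := by rw [hJdef]; noncomm_ring
    rw [h1, hoff₁, add_zero] at hoff₂
    rw [hoff₂, smul_zero] at h2
    exact eq_neg_of_add_eq_zero_left h2
  have hJVre (x : H) : (inner ℂ x (J (V x))).re = 0 := by
    have h1 : V (J x) = -J (V x) := congr($hJV x)
    have h2 : inner ℂ x (J (V x)) = -inner ℂ (J (V x)) x := by
      rw [← hJ.inner_map_comm, ← hV.inner_map_comm, h1, inner_neg_left]
    have h3 := congr(Complex.re $h2)
    rw [Complex.neg_re, ← inner_conj_symm (J (V x)) x, Complex.conj_re] at h3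
    linarith
  have hsplit (l : ℝ) (x : H) : inner ℂ x (J (B x - (l : ℂ) • x)) =
      inner ℂ x (J (A x - (l : ℂ) • x)) + inner ℂ x (J (V x)) := by
    rw [← inner_add_right, ← map_add, hB, add_apply]
    congr 2
    abel
  have hJB (l γ : ℝ) (hla : γ ≤ l - a) (hlb : γ ≤ b - l) (x : H) :
      γ * ‖x‖ ^ 2 ≤ (inner ℂ x (J (B x - (l : ℂ) • x))).re := by
    rw [hsplit, Complex.add_re, hJVre, add_zero, hJdef]
    exact hP.le_re_inner_reflection hAP hPle hleQ hla hlb x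
  have hJBim (x : H) : |(inner ℂ x (J (B x - (m : ℂ) • x))).im| ≤ ‖V‖ * ‖x‖ ^ 2 := by
    have h1 := hP.im_inner_reflection hA hAP m x
    rw [← hJdef] at h1
    rw [hsplit, Complex.add_im, h1, zero_add]
    calc _ ≤ ‖inner ℂ x (J (V x))‖ := Complex.abs_im_le_norm _
      _ ≤ ‖x‖ * ‖J (V x)‖ := norm_inner_le_norm _ _
      _ ≤ ‖x‖ * (‖V‖ * ‖x‖) := by
        rw [hJ.norm_map_eq_of_mul_self_eq_one hJJ]
        gcongr
        exact V.le_opNorm x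
      _ = ‖V‖ * ‖x‖ ^ 2 := by ring
  -- the gap `(a, b)` is free of spectrum of `B`
  have hgap : EB (Set.Ioo a b) = 0 := by
    refine hEB.map_isOpen_eq_zero hBself isOpen_Ioo fun l hl ↦ ?_
    refine ⟨min (l - a) (b - l), lt_min (by linarith [hl.1]) (by linarith [hl.2]), fun x ↦ ?_⟩
    have h1 := hJB l _ (min_le_left _ _) (min_le_right _ _) x
    have h2 : (inner ℂ x (J (B x - (l : ℂ) • x))).re ≤ ‖x‖ * ‖B x - (l : ℂ) • x‖ := by
      rw [← hJ.norm_map_eq_of_mul_self_eq_one hJJ (B x - (l : ℂ) • x)]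
      exact re_inner_le_norm (𝕜 := ℂ) _ _
    rcases (norm_nonneg x).eq_or_lt with hx0 | hx0
    · simp [← hx0]
    · refine le_of_mul_le_mul_right ?_ hx0
      linarith
  obtain ⟨R, hRdef⟩ : ∃ R, R = EB (Set.Iic a) := ⟨_, rfl⟩
  have hR : IsStarProjection R := hRdef ▸ hEB.isStarProjection measurableSet_Iic
  have hBR : Commute B R := hRdef ▸ hEB.commutes _ measurableSet_Iic
  have hRc : EB (Set.Ici b) = 1 - R := by
    rw [hRdef, ← hEB.map_compl measurableSet_Iic, Set.compl_Iic, ← Set.Ioo_union_Ici_eq_Ioi hsub,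
      hEB.map_union measurableSet_Ioo measurableSet_Ici, hgap, zero_add]
    exact Set.disjoint_left.mpr fun t ht ht' ↦ ht.2.not_ge ht'
  have hRle (x : H) (hx : R x = x) : (inner ℂ x (B x)).re ≤ a * ‖x‖ ^ 2 :=
    hEB.re_inner_le hBself measurableSet_Iic (fun _ ht ↦ ht) (hRdef ▸ hx)
  have hleR (x : H) (hx : R x = 0) : b * ‖x‖ ^ 2 ≤ (inner ℂ x (B x)).re :=
    hEB.le_re_inner hBself measurableSet_Ici (fun _ ht ↦ ht) (by simp [hRc, hx])
  rw [← hRdef]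
  refine hP.norm_sub_le_of_reflections hR
    (Real.sin_nonneg_of_nonneg_of_le_pi (by linarith) (by linarith)) fun x ↦ ?_
  have key := cos_arctan_le_re_inner_reflections (T := B - (m : ℂ) • 1) (δ := d / 2) hJ hJJ
    hR.isSelfAdjoint_one_sub_two_nsmul hR.isIdempotentElem.one_sub_two_nsmul_mul_self
    (fun y ↦ by
      have := hR.le_re_inner_reflection hBR hRle hleR (l := m) (γ := 0)
        (by linarith) (by linarith) y
      rwa [zero_mul] at this)
    (fun y ↦ hR.im_inner_reflection hBself hBR m y) (half_pos hd0)
    (fun y ↦ hJB m (d / 2) (by linarith) (by linarith) y) hJBim x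
  rw [show ‖V‖ / (d / 2) = 2 * ‖V‖ / d by field_simp, hJdef] at key
  exact key
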